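/- arXiv:0709.4403 — 2 statements merged into one kernel-verified Lean document; each statement's English description precedes it below -/
import Mathlib

section
/- For all 3×3 complex matrices X₁, X₂, X₃, X₄, X₅, X₆ the following trace identity holds: t(1,2,3,4,5,6) + t(1,4,5,2,3,6) + t(2,3,1,4,5,6) + t(2,3,4,5,1,6) + t(4,5,1,2,3,6) + t(4,5,2,3,1,6) = t(1)t(6)t(2,3)t(4,5) − t(1,6)t(2,3)t(4,5) − t(6)t(1,2,3)t(4,5) − (1/2)t(1)t(2,3,6)t(4,5) − (1/2)t(1)t(6,2,3)t(4,5) + t(1,2,3,6)t(4,5) + t(1,6,2,3)t(4,5) − t(6)t(2,3)t(1,4,5) + (1/2)t(1,4,5)t(2,3,6) + (1/2)t(1,4,5)t(6,2,3) − t(1)t(2,3)t(6,4,5) + t(1,2,3)t(6,4,5) + t(2,3)t(1,4,5,6) + t(2,3)t(1,6,4,5) − t(1)t(6)t(2,3,4,5) + t(1,6)t(2,3,4,5) + t(6)t(1,2,3,4,5) + t(6)t(1,4,5,2,3) + t(1)t(4,5,2,3,6) + t(1)t(4,5,6,2,3). -/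
open Matrix

/-! The trace of `X₁ ⊗ ⋯ ⊗ Xₖ` composed with the antisymmetrizer is a sum of `k × k` determinants
indexed by words `f` of length `k` in the `n` basis vectors. If `n < k`, every word repeats a
letter, so each of these determinants has two equal columns and the sum vanishes. Laplace expansion
along a column turns the same sum into a polynomial in traces of products, whose
vanishing for `k = 4` is the fundamental relation between traces of `3 × 3` matrices. -/

section FundamentalTrace

variable {n R : Type*} [Fintype n] [CommRing R]

/-- The fundamental trace polynomial `∑ σ, sign σ * tr_σ(X₁, …, Xₖ)`, where `tr_σ` is the product,
over the cycles `(i₁ … iₘ)` of `σ`, of the traces of `X_{i₁} ⋯ X_{iₘ}`. The sum over `σ` is encoded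
as a determinant, for each choice `f` of the summation indices of all the traces. -/
def fundamentalTrace {k : ℕ} (X : Fin k → Matrix n n R) : R :=
  ∑ f : Fin k → n, det (of fun i j => X i (f i) (f j))

theorem fundamentalTrace_eq_zero {k : ℕ} (hk : Fintype.card n < k) (X : Fin k → Matrix n n R) :
    fundamentalTrace X = 0 := by
  refine Finset.sum_eq_zero fun f _ => ?_
  obtain ⟨i, j, hij, hf⟩ := Fintype.exists_ne_map_eq_of_card_lt f (by simpa using hk)
  exact det_zero_of_column_eq hij fun l => by simp only [of_apply, hf]

theorem fundamentalTrace_fin_zero (X : Fin 0 → Matrix n n R) : fundamentalTrace X = 1 := by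
  simp [fundamentalTrace]

theorem det_submatrix_succ_succAbove {k : ℕ} (M : Matrix (Fin (k + 1)) (Fin (k + 1)) R)
    (i : Fin k) :
    det (M.submatrix i.succ.succAbove Fin.succ) =
      (-1) ^ (i : ℕ) * det ((M.submatrix Fin.succ Fin.succ).updateRow i fun j => M 0 j.succ) := by
  have rows : (M.submatrix i.succ.succAbove Fin.succ).submatrix i.cycleRange id =
      (M.submatrix Fin.succ Fin.succ).updateRow i fun j => M 0 j.succ := by
    ext a b
    rcases eq_or_ne a i with rfl | ha
    · simp
    · simp [Equiv.swap_apply_of_ne_of_ne, ha, Fin.succ_ne_zero]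
  rw [← rows, det_permute, Fin.sign_cycleRange]
  simp [← mul_assoc, ← mul_pow]

theorem det_eq_sub_sum_det_updateRow {k : ℕ} (M : Matrix (Fin (k + 1)) (Fin (k + 1)) R) :
    det M = M 0 0 * det (M.submatrix Fin.succ Fin.succ) -
      ∑ i : Fin k, M i.succ 0 *
        det ((M.submatrix Fin.succ Fin.succ).updateRow i fun j => M 0 j.succ) := by
  rw [det_succ_column_zero, Fin.sum_univ_succ, sub_eq_add_neg, ← Finset.sum_neg_distrib]
  congr 1
  · simp
  · refine Finset.sum_congr rfl fun i _ => ?_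
    have signs_cancel : (-1 : R) ^ (i : ℕ) * (-1) ^ (i : ℕ) = 1 := by simp [← mul_pow]
    rw [det_submatrix_succ_succAbove, Fin.val_succ, pow_succ]
    linear_combination -(M i.succ 0 *
      det ((M.submatrix Fin.succ Fin.succ).updateRow i fun j => M 0 j.succ)) * signs_cancel

theorem det_updateRow_sum_smul {m ι : Type*} [Fintype m] [DecidableEq m] [Fintype ι]
    (M : Matrix m m R) (i : m) (c : ι → R) (v : ι → m → R) :
    det (M.updateRow i (∑ a, c a • v a)) = ∑ a, c a * det (M.updateRow i (v a)) := by
  simp only [← det_updateRow_smul]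
  exact detRowAlternating.map_update_sum Finset.univ i (fun a => c a • v a) M

theorem det_update_mul {k : ℕ} (X : Fin k → Matrix n n R) (Z : Matrix n n R) (i : Fin k)
    (f : Fin k → n) :
    det (of fun l j => Function.update X i (X i * Z) l (f l) (f j)) =
      ∑ a, X i (f i) a * det ((of fun l j => X l (f l) (f j)).updateRow i fun j => Z a (f j)) := by
  rw [← det_updateRow_sum_smul]
  congr 1
  ext l j
  rcases eq_or_ne l i with rfl | hl
  · simp [mul_apply]
  · simp [hl]

-- A permutation either fixes the index of `Z` or makes `Z` follow some `Xᵢ` in its cycle; in the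
-- second case, merging the two factors into `Xᵢ * Z` shortens the cycle and flips the sign.
theorem fundamentalTrace_vecCons {k : ℕ} (Z : Matrix n n R) (X : Fin k → Matrix n n R) :
    fundamentalTrace (vecCons Z X) =
      trace Z * fundamentalTrace X -
        ∑ i, fundamentalTrace (Function.update X i (X i * Z)) := by
  have expand (a : n) (f : Fin k → n) :
      det (of fun i j => vecCons Z X i (vecCons a f i) (vecCons a f j)) =
        Z a a * det (of fun i j => X i (f i) (f j)) -
          ∑ i, X i (f i) a *
            det ((of fun l j => X l (f l) (f j)).updateRow i fun j => Z a (f j)) :=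
    det_eq_sub_sum_det_updateRow _
  calc
    fundamentalTrace (vecCons Z X)
      = ∑ a, ∑ f : Fin k → n,
          det (of fun i j => vecCons Z X i (vecCons a f i) (vecCons a f j)) := by
      rw [fundamentalTrace, ← (Fin.consEquiv fun _ => n).sum_comp, Fintype.sum_prod_type]
      rfl
    _ = ∑ a, ∑ f : Fin k → n, Z a a * det (of fun i j => X i (f i) (f j)) -
          ∑ a, ∑ f : Fin k → n, ∑ i, X i (f i) a *
            det ((of fun l j => X l (f l) (f j)).updateRow i fun j => Z a (f j)) := by
      simp only [expand, Finset.sum_sub_distrib]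
    _ = trace Z * fundamentalTrace X - ∑ f : Fin k → n, ∑ i, ∑ a, X i (f i) a *
            det ((of fun l j => X l (f l) (f j)).updateRow i fun j => Z a (f j)) := by
      congr 1
      · simp only [trace, diag_apply, fundamentalTrace, Finset.sum_mul_sum]
      · rw [Finset.sum_comm]
        exact Finset.sum_congr rfl fun f _ => Finset.sum_comm
    _ = trace Z * fundamentalTrace X -
          ∑ i, fundamentalTrace (Function.update X i (X i * Z)) := by
      simp only [← det_update_mul, fundamentalTrace]
      rw [Finset.sum_comm]

theorem update_vecCons_zero {α : Type*} {k : ℕ} (x y : α) (v : Fin k → α) :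
    Function.update (vecCons x v) 0 y = vecCons y v :=
  Fin.update_cons_zero (α := fun _ => α) x v y

theorem update_vecCons_succ {α : Type*} {k : ℕ} (x y : α) (v : Fin k → α) (i : Fin k) :
    Function.update (vecCons x v) i.succ y = vecCons x (Function.update v i y) :=
  (Fin.cons_update (α := fun _ => α) x v i y).symm

theorem fundamentalTrace_three (X Y Z : Matrix n n R) :
    fundamentalTrace ![X, Y, Z] = trace X * trace Y * trace Z - trace X * trace (Y * Z)
      - trace Y * trace (X * Z) - trace Z * trace (X * Y)
      + trace (X * Y * Z) + trace (X * Z * Y) := by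
  simp only [fundamentalTrace_vecCons, fundamentalTrace_fin_zero, Fin.sum_univ_succ,
    Fin.sum_univ_zero, update_vecCons_zero, update_vecCons_succ, cons_val_zero, cons_val_succ]
  rw [← mul_assoc, trace_mul_comm Y X, trace_mul_comm Z X, trace_mul_comm Z Y,
    trace_mul_cycle Z Y X, trace_mul_cycle Z X Y, trace_mul_cycle Y Z X]
  ring

theorem fundamentalTrace_four (W X Y Z : Matrix n n R) :
    fundamentalTrace ![W, X, Y, Z] = trace W * fundamentalTrace ![X, Y, Z]
      - fundamentalTrace ![X * W, Y, Z] - fundamentalTrace ![X, Y * W, Z]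
      - fundamentalTrace ![X, Y, Z * W] := by
  rw [fundamentalTrace_vecCons]
  simp only [Fin.sum_univ_succ, Fin.sum_univ_zero, update_vecCons_zero, update_vecCons_succ,
    cons_val_zero, cons_val_succ]
  ring

theorem fundamental_trace_identity_of_card_le_three (hn : Fintype.card n ≤ 3)
    (U X Y Z : Matrix n n R) :
    trace (U * X * Y * Z) + trace (U * Y * X * Z) + trace (X * U * Y * Z)
      + trace (X * Y * U * Z) + trace (Y * U * X * Z) + trace (Y * X * U * Z)
    = trace U * trace Z * trace X * trace Y
      - trace (U * Z) * trace X * trace Y - trace Z * trace (U * X) * trace Y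
      - trace U * trace (X * Z) * trace Y + trace (U * X * Z) * trace Y
      + trace (U * Z * X) * trace Y - trace Z * trace X * trace (U * Y)
      + trace (U * Y) * trace (X * Z) - trace U * trace X * trace (Z * Y)
      + trace (U * X) * trace (Z * Y) + trace X * trace (U * Y * Z)
      + trace X * trace (U * Z * Y) - trace U * trace Z * trace (X * Y)
      + trace (U * Z) * trace (X * Y) + trace Z * trace (U * X * Y)
      + trace Z * trace (U * Y * X) + trace U * trace (Y * X * Z)
      + trace U * trace (Y * Z * X) := by
  have vanishing := fundamentalTrace_eq_zero (Nat.lt_succ_of_le hn) ![Z, U, X, Y]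
  rw [fundamentalTrace_four] at vanishing
  simp only [fundamentalTrace_three, ← mul_assoc] at vanishing
  have rotate (A B C D : Matrix n n R) : trace (A * B * C * D) = trace (D * A * B * C) := by
    simpa only [mul_assoc] using trace_mul_comm (A * B * C) D
  linear_combination -vanishing - rotate U Z X Y - rotate Y U Z X - rotate U Z Y X - rotate X U Z Y
    - rotate U X Z Y - rotate U Y Z X
    + trace U * (trace_mul_cycle X Z Y - trace_mul_cycle Y Z X)
    + (trace (U * X) - trace U * trace X) * trace_mul_comm Y Z

theorem six_letter_trace_identity_two_general (hn : Fintype.card n ≤ 3)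
    (X₁ X₂ X₃ X₄ X₅ X₆ : Matrix n n R) :
    trace (X₁ * X₂ * X₃ * X₄ * X₅ * X₆) + trace (X₁ * X₄ * X₅ * X₂ * X₃ * X₆)
      + trace (X₂ * X₃ * X₁ * X₄ * X₅ * X₆) + trace (X₂ * X₃ * X₄ * X₅ * X₁ * X₆)
      + trace (X₄ * X₅ * X₁ * X₂ * X₃ * X₆) + trace (X₄ * X₅ * X₂ * X₃ * X₁ * X₆)
    =
      trace X₁ * trace X₆ * trace (X₂ * X₃) * trace (X₄ * X₅)
      - trace (X₁ * X₆) * trace (X₂ * X₃) * trace (X₄ * X₅)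
      - trace X₆ * trace (X₁ * X₂ * X₃) * trace (X₄ * X₅)
      - trace X₁ * trace (X₂ * X₃ * X₆) * trace (X₄ * X₅)
      + trace (X₁ * X₂ * X₃ * X₆) * trace (X₄ * X₅)
      + trace (X₁ * X₆ * X₂ * X₃) * trace (X₄ * X₅)
      - trace X₆ * trace (X₂ * X₃) * trace (X₁ * X₄ * X₅)
      + trace (X₁ * X₄ * X₅) * trace (X₂ * X₃ * X₆)
      - trace X₁ * trace (X₂ * X₃) * trace (X₆ * X₄ * X₅)
      + trace (X₁ * X₂ * X₃) * trace (X₆ * X₄ * X₅)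
      + trace (X₂ * X₃) * trace (X₁ * X₄ * X₅ * X₆)
      + trace (X₂ * X₃) * trace (X₁ * X₆ * X₄ * X₅)
      - trace X₁ * trace X₆ * trace (X₂ * X₃ * X₄ * X₅)
      + trace (X₁ * X₆) * trace (X₂ * X₃ * X₄ * X₅)
      + trace X₆ * trace (X₁ * X₂ * X₃ * X₄ * X₅)
      + trace X₆ * trace (X₁ * X₄ * X₅ * X₂ * X₃)
      + trace X₁ * trace (X₄ * X₅ * X₂ * X₃ * X₆)
      + trace X₁ * trace (X₄ * X₅ * X₆ * X₂ * X₃) := by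
  simpa only [← mul_assoc] using
    fundamental_trace_identity_of_card_le_three hn X₁ (X₂ * X₃) (X₄ * X₅) X₆

end FundamentalTrace

/-- A six-letter trace identity obtained from the fundamental relation with
`U = X₁`, `X = X₂X₃`, `Y = X₄X₅`, `Z = X₆`. -/
theorem six_letter_trace_identity_two (X₁ X₂ X₃ X₄ X₅ X₆ : Matrix (Fin 3) (Fin 3) ℂ) :
    trace (X₁*X₂*X₃*X₄*X₅*X₆) + trace (X₁*X₄*X₅*X₂*X₃*X₆)
      + trace (X₂*X₃*X₁*X₄*X₅*X₆) + trace (X₂*X₃*X₄*X₅*X₁*X₆)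
      + trace (X₄*X₅*X₁*X₂*X₃*X₆) + trace (X₄*X₅*X₂*X₃*X₁*X₆)
    =
      trace X₁ * trace X₆ * trace (X₂*X₃) * trace (X₄*X₅)
      - trace (X₁*X₆) * trace (X₂*X₃) * trace (X₄*X₅)
      - trace X₆ * trace (X₁*X₂*X₃) * trace (X₄*X₅)
      - (1/2) * trace X₁ * trace (X₂*X₃*X₆) * trace (X₄*X₅)
      - (1/2) * trace X₁ * trace (X₆*X₂*X₃) * trace (X₄*X₅)
      + trace (X₁*X₂*X₃*X₆) * trace (X₄*X₅)
      + trace (X₁*X₆*X₂*X₃) * trace (X₄*X₅)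
      - trace X₆ * trace (X₂*X₃) * trace (X₁*X₄*X₅)
      + (1/2) * trace (X₁*X₄*X₅) * trace (X₂*X₃*X₆)
      + (1/2) * trace (X₁*X₄*X₅) * trace (X₆*X₂*X₃)
      - trace X₁ * trace (X₂*X₃) * trace (X₆*X₄*X₅)
      + trace (X₁*X₂*X₃) * trace (X₆*X₄*X₅)
      + trace (X₂*X₃) * trace (X₁*X₄*X₅*X₆)
      + trace (X₂*X₃) * trace (X₁*X₆*X₄*X₅)
      - trace X₁ * trace X₆ * trace (X₂*X₃*X₄*X₅)
      + trace (X₁*X₆) * trace (X₂*X₃*X₄*X₅)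
      + trace X₆ * trace (X₁*X₂*X₃*X₄*X₅)
      + trace X₆ * trace (X₁*X₄*X₅*X₂*X₃)
      + trace X₁ * trace (X₄*X₅*X₂*X₃*X₆)
      + trace X₁ * trace (X₄*X₅*X₆*X₂*X₃) := by
  linear_combination six_letter_trace_identity_two_general (by simp) X₁ X₂ X₃ X₄ X₅ X₆ +
    (1/2) * (trace (X₁*X₄*X₅) - trace X₁ * trace (X₄*X₅)) * trace_mul_cycle X₂ X₃ X₆
end

section
/- For all 3×3 complex matrices X, Y, U, V, W and Z, one has the matrix identity 6·(XYZWUV + YXZWUV) = pol₃(X+Y,U,V,W,Z) − pol₃(X,U,V,W,Z) − pol₃(Y,U,V,W,Z). -/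
open Matrix

/-- The polarization of the Cayley-Hamilton polynomial for 3x3 complex matrices. -/
noncomputable def pol (X Y : Matrix (Fin 3) (Fin 3) ℂ) : Matrix (Fin 3) (Fin 3) ℂ :=
  (trace X) • (Y * X + X * Y) + (trace (X * Y) - trace X * trace Y) • X
    + ((trace (X * X) - (trace X) ^ 2) / 2) • Y
    + (trace (Y * X * X) - trace X * trace (X * Y)
        + trace Y * (((trace X) ^ 2 - trace (X * X)) / 2)) • (1 : Matrix (Fin 3) (Fin 3) ℂ)
    + (trace Y) • (X * X)

/-- Step 1 polynomial of the reduction algorithm. -/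
noncomputable def pol₂ (X Y Z : Matrix (Fin 3) (Fin 3) ℂ) : Matrix (Fin 3) (Fin 3) ℂ :=
  pol Y (X * X * Z) + X * pol Y (X * Z) - pol X (Y * Y) * Z - pol X Y * Z * Y
    + (X * X) * pol Y Z

/-- Intermediate polynomial of STEP 2. -/
noncomputable def prepol₃ (X U V Z : Matrix (Fin 3) (Fin 3) ℂ) : Matrix (Fin 3) (Fin 3) ℂ :=
  pol₂ X (U + V) Z - pol₂ X U Z - pol₂ X V Z

/-- STEP 2 polynomial of the reduction algorithm. -/
noncomputable def pol₃ (X U V W Z : Matrix (Fin 3) (Fin 3) ℂ) : Matrix (Fin 3) (Fin 3) ℂ :=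
  prepol₃ X U V (Z * W) + prepol₃ X (W * U) V Z - prepol₃ X W V Z * U

/-!
Both sides of the Cayley–Hamilton identity `X³ = tr X • X² - tr (adj X) • X + det X • 1` are
homogeneous cubics, so it can be polarized: comparing the parts linear in `Y` of the identity for
`X + Y` turns the trace expression `pol X Y` into `X²Y + XYX + YX²`. No traces remain after this:
`pol₂ X Y Z` telescopes to `3 X²ZY²`, whose polarization in `Y` is `3 X²Z(UV + VU)`. Moving `W`
across the three terms of `pol₃` cancels all words except `6 X²ZWUV`, and polarizing `X²` gives
`XY + YX`.
-/

lemma add_mul_self_sub_mul_self_sub_mul_self {A : Type*} [NonUnitalNonAssocRing A] (x y : A) :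
    (x + y) * (x + y) - x * x - y * y = x * y + y * x := by
  rw [add_mul, mul_add, mul_add]
  abel

section CayleyHamilton

variable {R : Type*} [CommRing R] (X Y : Matrix (Fin 3) (Fin 3) R)

lemma adjugate_eq_of_fin_three :
    adjugate X = X * X - trace X • X + trace (adjugate X) • (1 : Matrix (Fin 3) (Fin 3) R) := by
  ext i j
  fin_cases i <;> fin_cases j <;>
    simp only [adjugate_fin_three, one_fin_three, trace_fin_three, mul_apply, Fin.sum_univ_three,
      Matrix.add_apply, Matrix.sub_apply, Matrix.smul_apply, smul_eq_mul, of_apply, cons_val',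
      cons_val, cons_val_fin_one, Fin.zero_eta, Fin.mk_one, Fin.reduceFinMk] <;>
    ring

lemma cayleyHamilton_fin_three :
    X * X * X = trace X • (X * X) - trace (adjugate X) • X
      + det X • (1 : Matrix (Fin 3) (Fin 3) R) := by
  have h := adjugate_mul X
  rw [adjugate_eq_of_fin_three] at h
  simp only [add_mul, sub_mul, smul_mul_assoc, one_mul] at h
  linear_combination (norm := module) h

lemma trace_adjugate_mul_fin_three :
    trace (adjugate X * Y)
      = trace (X * X * Y) - trace X * trace (X * Y) + trace (adjugate X) * trace Y := by
  have h := congrArg (fun M ↦ trace (M * Y)) (adjugate_eq_of_fin_three X)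
  simpa only [add_mul, sub_mul, smul_mul_assoc, one_mul, trace_add, trace_sub, trace_smul,
    smul_eq_mul] using h

lemma two_mul_trace_adjugate_fin_three :
    2 * trace (adjugate X) = trace X ^ 2 - trace (X * X) := by
  have h := trace_adjugate_mul_fin_three X 1
  simp only [mul_one, trace_one, Fintype.card_fin, Nat.cast_ofNat] at h
  linear_combination -h

lemma trace_adjugate_add_fin_three :
    trace (adjugate (X + Y))
      = trace (adjugate X) + (trace X * trace Y - trace (X * Y)) + trace (adjugate Y) := by
  simp only [adjugate_fin_three, trace_fin_three, mul_apply, Fin.sum_univ_three,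
    Matrix.add_apply, of_apply, cons_val]
  ring

lemma det_add_fin_three :
    det (X + Y) = det X + trace (adjugate X * Y) + trace (X * adjugate Y) + det Y := by
  simp only [det_fin_three, adjugate_fin_three, trace_fin_three, mul_apply, Fin.sum_univ_three,
    Matrix.add_apply, of_apply, cons_val]
  ring

lemma polarized_cayleyHamilton_fin_three [Invertible (2 : R)] :
    X * X * Y + X * Y * X + Y * X * X
      = trace X • (Y * X + X * Y) + (trace (X * Y) - trace X * trace Y) • X
        - trace (adjugate X) • Y + trace (adjugate X * Y) • (1 : Matrix (Fin 3) (Fin 3) R)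
        + trace Y • (X * X) := by
  have h_add := cayleyHamilton_fin_three (X + Y)
  have h_sub := cayleyHamilton_fin_three (X + -Y)
  have adjugate_neg : adjugate (-Y) = adjugate Y := by
    simpa using adjugate_smul (-1 : R) Y
  have det_neg : det (-Y) = -det Y := by
    simp [Matrix.det_neg, Odd.neg_one_pow (by decide : Odd 3)]
  simp only [trace_adjugate_add_fin_three, det_add_fin_three, trace_add, trace_neg,
    adjugate_neg, det_neg, mul_neg, neg_mul, mul_add, add_mul] at h_add h_sub
  -- The part linear in `Y` of a cubic `F` is half of `F (X + Y) - F (X - Y) - 2 F Y`.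
  apply (isUnit_of_invertible (2 : R)).smul_left_cancel.mp
  linear_combination (norm := module) h_add - h_sub - (2 : R) • cayleyHamilton_fin_three Y

end CayleyHamilton

section Reduction

variable (X Y U V W Z : Matrix (Fin 3) (Fin 3) ℂ)

lemma pol_eq_add_add : pol X Y = X * X * Y + X * Y * X + Y * X * X := by
  have trace_adjugate : trace (adjugate X) = (trace X ^ 2 - trace (X * X)) / 2 := by
    linear_combination two_mul_trace_adjugate_fin_three X / 2
  rw [polarized_cayleyHamilton_fin_three, trace_adjugate_mul_fin_three, trace_adjugate, pol,
    trace_mul_cycle X X Y]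
  module

lemma pol₂_eq_three_smul : pol₂ X Y Z = (3 : ℂ) • (X * X * Z * (Y * Y)) := by
  simp only [pol₂, pol_eq_add_add, mul_add, add_mul, mul_assoc]
  module

lemma prepol₃_eq_three_smul :
    prepol₃ X U V Z = (3 : ℂ) • (X * X * Z * (U * V + V * U)) := by
  simp only [prepol₃, pol₂_eq_three_smul, ← smul_sub, ← mul_sub,
    add_mul_self_sub_mul_self_sub_mul_self]

lemma pol₃_eq_six_smul : pol₃ X U V W Z = (6 : ℂ) • (X * X * Z * W * U * V) := by
  simp only [pol₃, prepol₃_eq_three_smul, mul_add, add_mul, mul_assoc, smul_mul_assoc]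
  module

end Reduction

/-- STEP 3: `6·(XYZWUV + YXZWUV)` equals the polarization of `pol₃` in its first argument. -/
theorem step3_reduction (X Y U V W Z : Matrix (Fin 3) (Fin 3) ℂ) :
    (6 : ℂ) • (X * Y * Z * W * U * V + Y * X * Z * W * U * V)
      = pol₃ (X + Y) U V W Z - pol₃ X U V W Z - pol₃ Y U V W Z := by
  calc
    (6 : ℂ) • (X * Y * Z * W * U * V + Y * X * Z * W * U * V)
      = (6 : ℂ) • (((X + Y) * (X + Y) - X * X - Y * Y) * Z * W * U * V) := by
        rw [add_mul_self_sub_mul_self_sub_mul_self]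
        simp only [add_mul]
    _ = pol₃ (X + Y) U V W Z - pol₃ X U V W Z - pol₃ Y U V W Z := by
        simp only [pol₃_eq_six_smul, sub_mul, smul_sub]
end
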